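/- Let ℰ be an exact structure on an abelian category 𝒜 such that 𝒜 has enough ℰ-projectives and enough ℰ-injectives, and let A be an object of 𝒜. Then the following are equivalent: (1) for every ℰ-projective object P, every short exact sequence 0 → A → Z → P → 0 in 𝒜 splits; (2) every short exact sequence 0 → A → Z → V → 0 in 𝒜 is a conflation. -/

import Mathlib

open CategoryTheory Category Limits

universe v u

namespace ExactPaper

variable {𝒜 : Type u} [Category.{v} 𝒜] [Abelian 𝒜]

/-- A morphism is an admissible monic w.r.t. a class `c` of short complexes if it occurs
as the first map of a member of `c`. -/
def AdmMono (c : ShortComplex 𝒜 → Prop) {X Y : 𝒜} (f : X ⟶ Y) : Prop :=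
  ∃ (Z : 𝒜) (g : Y ⟶ Z) (w : f ≫ g = 0), c (ShortComplex.mk f g w)

/-- A morphism is an admissible epic w.r.t. a class `c` of short complexes if it occurs
as the second map of a member of `c`. -/
def AdmEpi (c : ShortComplex 𝒜 → Prop) {Y Z : 𝒜} (g : Y ⟶ Z) : Prop :=
  ∃ (X : 𝒜) (f : X ⟶ Y) (w : f ≫ g = 0), c (ShortComplex.mk f g w)

/-- A (Quillen) exact structure on an abelian category `𝒜`: a class of short exact
sequences, called conflations, closed under isomorphisms, containing all split short
exact sequences, such that admissible monics and epics are closed under composition,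
pushouts of admissible monics along arbitrary morphisms are admissible monics and
pullbacks of admissible epics along arbitrary morphisms are admissible epics. -/
structure ExactStructure (𝒜 : Type u) [Category.{v} 𝒜] [Abelian 𝒜] where
  conflation : ShortComplex 𝒜 → Prop
  shortExact_of_conflation : ∀ (S : ShortComplex 𝒜), conflation S → S.ShortExact
  conflation_of_iso : ∀ (S T : ShortComplex 𝒜), (S ≅ T) → conflation S → conflation T
  conflation_of_splitting : ∀ (S : ShortComplex 𝒜), S.Splitting → conflation S
  admMono_comp : ∀ {X Y Z : 𝒜} (f : X ⟶ Y) (g : Y ⟶ Z),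
    AdmMono conflation f → AdmMono conflation g → AdmMono conflation (f ≫ g)
  admEpi_comp : ∀ {X Y Z : 𝒜} (f : X ⟶ Y) (g : Y ⟶ Z),
    AdmEpi conflation f → AdmEpi conflation g → AdmEpi conflation (f ≫ g)
  admMono_pushout : ∀ {L M M' : 𝒜} (i : L ⟶ M) (f : L ⟶ M'),
    AdmMono conflation i → AdmMono conflation (pushout.inr i f)
  admEpi_pullback : ∀ {M N M' : 𝒜} (p : M ⟶ N) (g : M' ⟶ N),
    AdmEpi conflation p → AdmEpi conflation (pullback.snd p g)

namespace ExactStructure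

variable (E : ExactStructure 𝒜)

/-- An `ℰ`-projective object. -/
def EProjective (P : 𝒜) : Prop :=
  ∀ (S : ShortComplex 𝒜), E.conflation S → ∀ h : P ⟶ S.X₃, ∃ k : P ⟶ S.X₂, k ≫ S.g = h

/-- An `ℰ`-injective object. -/
def EInjective (I : 𝒜) : Prop :=
  ∀ (S : ShortComplex 𝒜), E.conflation S → ∀ h : S.X₁ ⟶ I, ∃ k : S.X₂ ⟶ I, S.f ≫ k = h

/-- `𝒜` has enough `ℰ`-projectives. -/
def EnoughProjectives : Prop :=
  ∀ M : 𝒜, ∃ (K P : 𝒜) (i : K ⟶ P) (p : P ⟶ M) (w : i ≫ p = 0),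
    E.conflation (ShortComplex.mk i p w) ∧ E.EProjective P

/-- `𝒜` has enough `ℰ`-injectives. -/
def EnoughInjectives : Prop :=
  ∀ M : 𝒜, ∃ (I C : 𝒜) (i : M ⟶ I) (p : I ⟶ C) (w : i ≫ p = 0),
    E.conflation (ShortComplex.mk i p w) ∧ E.EInjective I

/-- `Ext¹_ℰ(M,N) = 0`: every conflation `0 → N → Z → M → 0` splits. -/
def Ext1Zero (M N : 𝒜) : Prop :=
  ∀ (Z : 𝒜) (i : N ⟶ Z) (p : Z ⟶ M) (w : i ≫ p = 0),
    E.conflation (ShortComplex.mk i p w) → ∃ r : Z ⟶ N, i ≫ r = 𝟙 N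

/-- The right `ℰ`-orthogonal class `𝒳^⊥`. -/
def rightPerp (𝒳 : Set 𝒜) : Set 𝒜 := {N | ∀ X ∈ 𝒳, E.Ext1Zero X N}

/-- The left `ℰ`-orthogonal class `^⊥𝒴`. -/
def leftPerp (𝒴 : Set 𝒜) : Set 𝒜 := {M | ∀ Y ∈ 𝒴, E.Ext1Zero M Y}

/-- A class is closed under `ℰ`-extensions. -/
def ClosedUnderExtensions (𝒯 : Set 𝒜) : Prop :=
  ∀ S : ShortComplex 𝒜, E.conflation S → S.X₁ ∈ 𝒯 → S.X₃ ∈ 𝒯 → S.X₂ ∈ 𝒯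

/-- An `ℰ`-resolving class. -/
def Resolving (𝒯 : Set 𝒜) : Prop :=
  (∀ P : 𝒜, E.EProjective P → P ∈ 𝒯) ∧ E.ClosedUnderExtensions 𝒯 ∧
    ∀ S : ShortComplex 𝒜, E.conflation S → S.X₂ ∈ 𝒯 → S.X₃ ∈ 𝒯 → S.X₁ ∈ 𝒯

/-- An `ℰ`-coresolving class. -/
def Coresolving (𝒯 : Set 𝒜) : Prop :=
  (∀ I : 𝒜, E.EInjective I → I ∈ 𝒯) ∧ E.ClosedUnderExtensions 𝒯 ∧
    ∀ S : ShortComplex 𝒜, E.conflation S → S.X₁ ∈ 𝒯 → S.X₂ ∈ 𝒯 → S.X₃ ∈ 𝒯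

/-- `(𝒳,𝒴)` is a complete hereditary `ℰ`-cotorsion pair. -/
def CompleteHereditaryCotorsionPair (𝒳 𝒴 : Set 𝒜) : Prop :=
  𝒳 = E.leftPerp 𝒴 ∧ 𝒴 = E.rightPerp 𝒳 ∧
  (∀ A : 𝒜, ∃ (Y X : 𝒜) (i : Y ⟶ X) (p : X ⟶ A) (w : i ≫ p = 0),
      E.conflation (ShortComplex.mk i p w) ∧ X ∈ 𝒳 ∧ Y ∈ 𝒴) ∧
  (∀ A : 𝒜, ∃ (Y' X' : 𝒜) (i : A ⟶ Y') (p : Y' ⟶ X') (w : i ≫ p = 0),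
      E.conflation (ShortComplex.mk i p w) ∧ X' ∈ 𝒳 ∧ Y' ∈ 𝒴) ∧
  E.Resolving 𝒳

end ExactStructure

/-- `f : X ⟶ A` is an `𝒳`-precover of `A`. -/
def IsPrecover (𝒳 : Set 𝒜) {X A : 𝒜} (f : X ⟶ A) : Prop :=
  X ∈ 𝒳 ∧ ∀ X' : 𝒜, X' ∈ 𝒳 → ∀ g : X' ⟶ A, ∃ h : X' ⟶ X, h ≫ f = g

/-- `f : X ⟶ A` is an `𝒳`-cover of `A`. -/
def IsCover (𝒳 : Set 𝒜) {X A : 𝒜} (f : X ⟶ A) : Prop :=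
  IsPrecover 𝒳 f ∧ ∀ h : X ⟶ X, h ≫ f = f → IsIso h

/-- `f : A ⟶ Y` is a `𝒴`-preenvelope of `A`. -/
def IsPreenvelope (𝒴 : Set 𝒜) {A Y : 𝒜} (f : A ⟶ Y) : Prop :=
  Y ∈ 𝒴 ∧ ∀ Y' : 𝒜, Y' ∈ 𝒴 → ∀ g : A ⟶ Y', ∃ h : Y ⟶ Y', f ≫ h = g

/-- `f : A ⟶ Y` is a `𝒴`-envelope of `A`. -/
def IsEnvelope (𝒴 : Set 𝒜) {A Y : 𝒜} (f : A ⟶ Y) : Prop :=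
  IsPreenvelope 𝒴 f ∧ ∀ h : Y ⟶ Y, f ≫ h = f → IsIso h

/-- A class of objects closed under isomorphisms. -/
def ClosedUnderIsos (𝒳 : Set 𝒜) : Prop := ∀ X Y : 𝒜, (X ≅ Y) → X ∈ 𝒳 → Y ∈ 𝒳

/-- A class of objects closed under direct summands. -/
def ClosedUnderDirectSummands (𝒳 : Set 𝒜) : Prop :=
  ∀ X Y : 𝒜, (∃ (s : Y ⟶ X) (r : X ⟶ Y), s ≫ r = 𝟙 Y) → X ∈ 𝒳 → Y ∈ 𝒳

end ExactPaper

/-! Say that `P` lifts against `0 → A → Z → V → 0` if every morphism `P ⟶ V` factors through `Z`.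
Pulling back along `P ⟶ V` shows that all extensions of `P` by `A` split if and only if `P` lifts
against all short exact sequences starting at `A`. On the other hand, if there are enough
`ℰ`-projectives, a short exact sequence is a conflation if and only if all `ℰ`-projectives lift
against it: lifting an `ℰ`-projective presentation `0 → K → P → V → 0` to `Z` exhibits the sequence
as the pushout of a conflation along the induced map `K ⟶ A`. Hence both conditions say that every
`ℰ`-projective lifts against every short exact sequence starting at `A`. -/

namespace ExactPaper

section ShortExactSequences

variable {𝒜 : Type u} [Category.{v} 𝒜] [Abelian 𝒜] {S : ShortComplex 𝒜}

/-- The pullback of a short complex along a morphism `h` into its third object, with `S.X₁`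
itself as first object; it serves to pull back extensions. -/
noncomputable abbrev pullbackComplex (S : ShortComplex 𝒜) {V : 𝒜} (h : V ⟶ S.X₃) :
    ShortComplex 𝒜 :=
  .mk (pullback.lift S.f 0 (by simp)) (pullback.snd S.g h) (pullback.lift_snd _ _ _)

/-- The pushout of a short complex along a morphism `a` out of its first object, with `S.X₃`
itself as third object; it serves to push out extensions. -/
noncomputable abbrev pushoutComplex (S : ShortComplex 𝒜) {A : 𝒜} (a : S.X₁ ⟶ A) :
    ShortComplex 𝒜 :=
  .mk (pushout.inr S.f a) (pushout.desc S.g 0 (by simp)) (pushout.inr_desc _ _ _)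

theorem shortExact_pullbackComplex (hS : S.ShortExact) {V : 𝒜} (h : V ⟶ S.X₃) :
    (pullbackComplex S h).ShortExact := by
  have := hS.mono_f
  have := hS.epi_g
  have mono_f : Mono (pullbackComplex S h).f :=
    mono_of_mono_fac (pullback.lift_fst S.f 0 (by simp))
  refine .mk' (ShortComplex.exact_of_f_is_kernel _ ?_) mono_f
    (inferInstanceAs (Epi (pullback.snd S.g h)))
  refine KernelFork.IsLimit.ofι' _ _ fun {T} (t : T ⟶ pullback S.g h)
    (t_snd : t ≫ pullback.snd S.g h = 0) => ?_
  have fst_g : (t ≫ pullback.fst S.g h) ≫ S.g = 0 := by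
    rw [assoc, pullback.condition, reassoc_of% t_snd, zero_comp]
  have fac : hS.exact.lift _ fst_g ≫ pullback.lift S.f 0 (by simp) = t :=
    pullback.hom_ext (by simp [pullback.lift_fst]) (by simp [pullback.lift_snd, t_snd])
  exact ⟨hS.exact.lift _ fst_g, fac⟩

theorem shortExact_pushoutComplex (hS : S.ShortExact) {A : 𝒜} (a : S.X₁ ⟶ A) :
    (pushoutComplex S a).ShortExact := by
  have := hS.mono_f
  have := hS.epi_g
  have epi_g : Epi (pushoutComplex S a).g :=
    epi_of_epi_fac (pushout.inl_desc S.g 0 (by simp))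
  refine .mk' (ShortComplex.exact_of_g_is_cokernel _ ?_)
    (inferInstanceAs (Mono (pushout.inr S.f a))) epi_g
  refine CokernelCofork.IsColimit.ofπ' _ _ fun {T} (t : pushout S.f a ⟶ T)
    (inr_t : pushout.inr S.f a ≫ t = 0) => ?_
  have f_inl : S.f ≫ pushout.inl S.f a ≫ t = 0 := by
    rw [pushout.condition_assoc, inr_t, comp_zero]
  have fac : pushout.desc S.g 0 (by simp) ≫ hS.exact.desc _ f_inl = t :=
    pushout.hom_ext (by simp [pushout.inl_desc_assoc]) (by simp [pushout.inr_desc_assoc, inr_t])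
  exact ⟨hS.exact.desc _ f_inl, fac⟩

/-- `Ext¹_𝒜(P, A) = 0`, expressed without `Ext` groups: every short exact sequence
`0 → A → Z → P → 0` splits. -/
def ExtensionsSplit (P A : 𝒜) : Prop :=
  ∀ (Z : 𝒜) (i : A ⟶ Z) (p : Z ⟶ P) (w : i ≫ p = 0),
    (ShortComplex.mk i p w).ShortExact → ∃ r : Z ⟶ A, i ≫ r = 𝟙 A

theorem ExtensionsSplit.exists_lift {P : 𝒜} (hP : ExtensionsSplit P S.X₁) (hS : S.ShortExact)
    (h : P ⟶ S.X₃) : ∃ k : P ⟶ S.X₂, k ≫ S.g = h := by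
  have hpb := shortExact_pullbackComplex hS h
  obtain ⟨r, hr⟩ := hP _ _ _ _ hpb
  let σ := ShortComplex.Splitting.ofExactOfRetraction _ hpb.exact r hr hpb.epi_g
  have s_snd : σ.s ≫ pullback.snd S.g h = 𝟙 P := σ.s_g
  exact ⟨σ.s ≫ pullback.fst S.g h, by rw [assoc, pullback.condition, reassoc_of% s_snd]⟩

theorem extensionsSplit_iff_forall_exists_lift {P A : 𝒜} :
    ExtensionsSplit P A ↔ ∀ (Z V : 𝒜) (i : A ⟶ Z) (p : Z ⟶ V) (w : i ≫ p = 0),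
      (ShortComplex.mk i p w).ShortExact → ∀ h : P ⟶ V, ∃ k : P ⟶ Z, k ≫ p = h := by
  refine ⟨fun hP Z V i p w hS h => hP.exists_lift hS h, fun lift Z i p w hS => ?_⟩
  obtain ⟨s, hs⟩ := lift Z P i p w hS (𝟙 P)
  let σ := ShortComplex.Splitting.ofExactOfSection _ hS.exact s hs hS.mono_f
  exact ⟨σ.r, σ.f_r⟩

end ShortExactSequences

namespace ExactStructure

variable {𝒜 : Type u} [Category.{v} 𝒜] [Abelian 𝒜] (E : ExactStructure 𝒜)
  {S T : ShortComplex 𝒜}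

theorem conflation_of_admMono (hS : S.ShortExact) (hf : AdmMono E.conflation S.f) :
    E.conflation S := by
  obtain ⟨C, q, w, hq⟩ := hf
  have hqS := E.shortExact_of_conflation _ hq
  let e : C ≅ S.X₃ := hqS.gIsCokernel.coconePointUniqueUpToIso hS.gIsCokernel
  have q_e : q ≫ e.hom = S.g :=
    hqS.gIsCokernel.comp_coconePointUniqueUpToIso_hom hS.gIsCokernel WalkingParallelPair.one
  let iso : ShortComplex.mk S.f q w ≅ S :=
    ShortComplex.isoMk (Iso.refl _) (Iso.refl _) e (by simp) (by simp [q_e])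
  exact E.conflation_of_iso _ _ iso hq

theorem conflation_pushoutComplex (hS : E.conflation S) {A : 𝒜} (a : S.X₁ ⟶ A) :
    E.conflation (pushoutComplex S a) :=
  E.conflation_of_admMono (shortExact_pushoutComplex (E.shortExact_of_conflation S hS) a)
    (E.admMono_pushout S.f a ⟨S.X₃, S.g, S.zero, hS⟩)

theorem conflation_of_hom_of_isIso_τ₃ (hS : E.conflation S) (hT : T.ShortExact) (φ : S ⟶ T)
    [IsIso φ.τ₃] : E.conflation T := by
  have hpo := E.conflation_pushoutComplex hS φ.τ₁
  let ψ : pushoutComplex S φ.τ₁ ⟶ T :=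
    { τ₁ := 𝟙 T.X₁
      τ₂ := pushout.desc φ.τ₂ T.f φ.comm₁₂.symm
      τ₃ := φ.τ₃
      comm₁₂ := by simp [pushout.inr_desc]
      comm₂₃ := pushout.hom_ext (by simp [pushout.inl_desc_assoc, φ.comm₂₃])
        (by simp [pushout.inr_desc_assoc]) }
  have : IsIso ψ.τ₁ := inferInstanceAs (IsIso (𝟙 T.X₁))
  have : IsIso ψ.τ₃ := inferInstanceAs (IsIso φ.τ₃)
  have : IsIso ψ.τ₂ :=
    ShortComplex.isIso₂_of_shortExact_of_isIso₁₃ ψ (E.shortExact_of_conflation _ hpo) hT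
  have : IsIso ψ := ShortComplex.isIso_of_isIso ψ
  exact E.conflation_of_iso _ _ (asIso ψ) hpo

variable {E}

theorem EnoughProjectives.conflation_iff_forall_exists_lift (hproj : E.EnoughProjectives)
    (hS : S.ShortExact) :
    E.conflation S ↔
      ∀ P : 𝒜, E.EProjective P → ∀ h : P ⟶ S.X₃, ∃ k : P ⟶ S.X₂, k ≫ S.g = h := by
  refine ⟨fun hc P hP => hP S hc, fun lift => ?_⟩
  obtain ⟨K, P, j, π, w, hc, hP⟩ := hproj S.X₃
  obtain ⟨k, hk⟩ := lift P hP π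
  have := hS.mono_f
  have j_k_g : (j ≫ k) ≫ S.g = 0 := by rw [assoc, hk, w]
  let φ : ShortComplex.mk j π w ⟶ S :=
    { τ₁ := hS.exact.lift (j ≫ k) j_k_g
      τ₂ := k
      τ₃ := 𝟙 S.X₃
      comm₁₂ := by simp
      comm₂₃ := by simp [hk] }
  have : IsIso φ.τ₃ := inferInstanceAs (IsIso (𝟙 S.X₃))
  exact E.conflation_of_hom_of_isIso_τ₃ hc hS φ

end ExactStructure

end ExactPaper

open ExactPaper in
theorem ext_vanishing_iff_all_ses_conflations_general
    {𝒜 : Type u} [Category.{v} 𝒜] [Abelian 𝒜]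
    (E : ExactStructure 𝒜) (hproj : E.EnoughProjectives) (A : 𝒜) :
    (∀ P : 𝒜, E.EProjective P → ExtensionsSplit P A) ↔
    (∀ (Z V : 𝒜) (i : A ⟶ Z) (p : Z ⟶ V) (w : i ≫ p = 0),
      (ShortComplex.mk i p w).ShortExact → E.conflation (ShortComplex.mk i p w)) := by
  simp only [extensionsSplit_iff_forall_exists_lift]
  constructor
  · intro lift Z V i p w hS
    exact (hproj.conflation_iff_forall_exists_lift hS).2 fun P hP => lift P hP Z V i p w hS
  · intro all_conflations P hP Z V i p w hS
    exact (hproj.conflation_iff_forall_exists_lift hS).1 (all_conflations Z V i p w hS) P hP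

open ExactPaper CategoryTheory Limits in
/-- **Lemma 4.3**: for an object `A`, `Ext¹_𝒜(P,A)` vanishes for all `ℰ`-projective
objects `P` (i.e. every short exact sequence `0 → A → Z → P → 0` splits) if and only if
every short exact sequence `0 → A → Z → V → 0` is a conflation. -/
theorem ext_vanishing_iff_all_ses_conflations
    {𝒜 : Type u} [Category.{v} 𝒜] [Abelian 𝒜]
    (E : ExactStructure 𝒜)
    (hproj : E.EnoughProjectives) (hinj : E.EnoughInjectives)
    (A : 𝒜) :
    (∀ P : 𝒜, E.EProjective P →
      ∀ (Z : 𝒜) (i : A ⟶ Z) (p : Z ⟶ P) (w : i ≫ p = 0),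
        (ShortComplex.mk i p w).ShortExact → ∃ r : Z ⟶ A, i ≫ r = 𝟙 A) ↔
    (∀ (Z V : 𝒜) (i : A ⟶ Z) (p : Z ⟶ V) (w : i ≫ p = 0),
      (ShortComplex.mk i p w).ShortExact → E.conflation (ShortComplex.mk i p w)) :=
  ext_vanishing_iff_all_ses_conflations_general E hproj A
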